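/- arXiv:2312.12177 — 2 statements merged into one kernel-verified Lean document; each statement's English description precedes it below -/
import Mathlib

section
/- Let a > b > 0 and let C be a Hermitian positive definite complex n×n matrix. The spectrum of a complex n×n matrix A belongs to the open elliptic region E_i = {λ ∈ ℂ : (Re λ)²/a² + (Im λ)²/b² < 1} if and only if there exists a Hermitian positive definite complex n×n matrix H satisfying H − (1/(2a²) + 1/(2b²))·A*HA − (1/(4a²) − 1/(4b²))·(HA² + (A*)²H) = C. -/
open Matrix
open scoped ComplexOrder

/-- In a complex Banach algebra, an element with spectrum in the open unit disc has a
convergent Neumann series. -/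
lemma summable_pow_of_spectrum {B : Type*} [NormedRing B] [NormedAlgebra ℂ B] [CompleteSpace B]
    (x : B) (h : ∀ z ∈ spectrum ℂ x, ‖z‖ < 1) : Summable (fun k : ℕ => x ^ k) := by
  rcases subsingleton_or_nontrivial B with hs | hn
  · have : (fun k : ℕ => x ^ k) = 0 := Subsingleton.elim _ _
    rw [this]; exact summable_zero
  have h1 : spectralRadius ℂ x < ((1 : NNReal) : ENNReal) :=
    spectrum.spectralRadius_lt_of_forall_lt x (fun z hz => h z hz)
  obtain ⟨r, hr1, hr2⟩ := ENNReal.lt_iff_exists_nnreal_btwn.1 h1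
  have hr2' : r < 1 := by exact_mod_cast hr2
  have ht := spectrum.pow_nnnorm_pow_one_div_tendsto_nhds_spectralRadius x
  have hev := (ht.eventually (gt_mem_nhds hr1)).and (Filter.eventually_gt_atTop 0)
  refine Summable.of_norm_bounded_eventually_nat (g := fun k => (r : ℝ) ^ k)
    (summable_geometric_of_lt_one r.2 (by exact_mod_cast hr2')) ?_
  filter_upwards [hev] with k hk
  obtain ⟨hk, hk0⟩ := hk
  have hk0' : (k : ℝ) ≠ 0 := by exact_mod_cast hk0.ne'
  have := ENNReal.rpow_le_rpow hk.le (Nat.cast_nonneg k : (0 : ℝ) ≤ k)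
  rw [← ENNReal.rpow_mul, one_div, inv_mul_cancel₀ hk0', ENNReal.rpow_one,
    ENNReal.rpow_natCast] at this
  have h3 : ‖x ^ k‖₊ ≤ r ^ k := by exact_mod_cast this
  exact_mod_cast h3

lemma summable_end {E : Type*} [NormedAddCommGroup E] [NormedSpace ℂ E] [FiniteDimensional ℂ E]
    (T : Module.End ℂ E) (h : ∀ z, T.HasEigenvalue z → ‖z‖ < 1) (x : E) :
    ∃ y, Filter.Tendsto (fun N => ∑ k ∈ Finset.range N, (T ^ k) x) Filter.atTop (nhds y) ∧
      y - T y = x := by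
  have : CompleteSpace E := FiniteDimensional.complete ℂ E
  let S : E →L[ℂ] E := Module.End.toContinuousLinearMap E T
  have hS : Summable (fun k : ℕ => S ^ k) := by
    apply summable_pow_of_spectrum
    intro z hz
    apply h
    rw [Module.End.hasEigenvalue_iff_mem_spectrum]
    rwa [AlgEquiv.spectrum_eq] at hz
  have hval : ∀ (k : ℕ) (v : E), (S ^ k) v = (T ^ k) v := by
    intro k v
    have : S ^ k = Module.End.toContinuousLinearMap E (T ^ k) := by
      rw [map_pow]
    rw [this]; rfl
  refine ⟨(∑' k, S ^ k) x, ?_, ?_⟩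
  · have h1 := hS.hasSum.tendsto_sum_nat
    have h2 := ((ContinuousLinearMap.apply ℂ E x).continuous.tendsto _).comp h1
    refine h2.congr fun N => ?_
    simp [hval]
  · have h1 : (1 - S) * ∑' k, S ^ k = 1 := hS.one_sub_mul_tsum_pow
    have h2 := congrArg (fun F : E →L[ℂ] E => F x) h1
    simp only [ContinuousLinearMap.mul_apply, ContinuousLinearMap.sub_apply,
      ContinuousLinearMap.one_apply] at h2
    exact h2

/-- A nonzero subspace invariant under `g` contains an eigenvector of `g`. -/
lemma exists_eig_in {E : Type*} [AddCommGroup E] [Module ℂ E] [FiniteDimensional ℂ E]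
    (W : Submodule ℂ E) (g : Module.End ℂ E) (hg : ∀ x ∈ W, g x ∈ W) (hW : W ≠ ⊥) :
    ∃ β : ℂ, W ⊓ g.eigenspace β ≠ ⊥ := by
  have : Nontrivial W := Submodule.nontrivial_iff_ne_bot.2 hW
  obtain ⟨β, hβ⟩ := Module.End.exists_eigenvalue (g.restrict hg)
  obtain ⟨v, hv⟩ := hβ.exists_hasEigenvector
  refine ⟨β, ?_⟩
  rw [Submodule.ne_bot_iff]
  refine ⟨v, ⟨v.2, ?_⟩, ?_⟩
  · rw [SetLike.mem_coe, Module.End.mem_eigenspace_iff]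
    exact congrArg Subtype.val hv.apply_eq_smul
  · simpa using hv.2

lemma exists_joint {E : Type*} [AddCommGroup E] [Module ℂ E] [FiniteDimensional ℂ E]
    (f g h : Module.End ℂ E) (hfg : Commute f g) (hfh : Commute f h) (hgh : Commute g h)
    (μ : ℂ) (hμ : f.HasEigenvalue μ) :
    ∃ (x : E) (β γ : ℂ), x ≠ 0 ∧ f x = μ • x ∧ g x = β • x ∧ h x = γ • x := by
  have key : ∀ (u v : Module.End ℂ E), Commute u v → ∀ (c : ℂ), ∀ x ∈ u.eigenspace c,
      v x ∈ u.eigenspace c := by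
    intro u v huv c x hx
    rw [Module.End.mem_eigenspace_iff] at *
    have := congrArg (fun F : Module.End ℂ E => F x) huv.eq
    simp only [Module.End.mul_apply] at this
    rw [this, hx, map_smul]
  obtain ⟨β, hβ⟩ := exists_eig_in (f.eigenspace μ) g (key f g hfg μ) hμ
  obtain ⟨γ, hγ⟩ := exists_eig_in (f.eigenspace μ ⊓ g.eigenspace β) h
    (fun x hx => ⟨key f h hfh μ x hx.1, key g h hgh β x hx.2⟩) hβ
  obtain ⟨x, hx, hx0⟩ := (Submodule.ne_bot_iff _).1 hγ
  refine ⟨x, β, γ, hx0, ?_, ?_, ?_⟩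
  · exact Module.End.mem_eigenspace_iff.1 hx.1.1
  · exact Module.End.mem_eigenspace_iff.1 hx.1.2
  · exact Module.End.mem_eigenspace_iff.1 hx.2

lemma posSemidef_of_tendsto {n : ℕ} (F : ℕ → Matrix (Fin n) (Fin n) ℂ)
    (H : Matrix (Fin n) (Fin n) ℂ) (hF : ∀ k, (F k).PosSemidef)
    (hl : Filter.Tendsto F Filter.atTop (nhds H)) : H.PosSemidef := by
  refine Matrix.PosSemidef.of_dotProduct_mulVec_nonneg ?_ ?_
  · have h1 : Filter.Tendsto (fun k => (F k)ᴴ) Filter.atTop (nhds Hᴴ) :=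
      ((continuous_id.matrix_conjTranspose).tendsto H).comp hl
    have h2 : (fun k => (F k)ᴴ) = F := funext fun k => (hF k).isHermitian
    rw [h2] at h1
    exact tendsto_nhds_unique h1 hl
  · intro x
    have hc : Continuous (fun M : Matrix (Fin n) (Fin n) ℂ => star x ⬝ᵥ (M *ᵥ x)) := by
      fun_prop
    exact ge_of_tendsto' ((hc.tendsto H).comp hl) fun k => (hF k).dotProduct_mulVec_nonneg x

lemma mem_spectrum_of_right {n : ℕ} {A X : Matrix (Fin n) (Fin n) ℂ} {β : ℂ} (hX : X ≠ 0)
    (h : X * A = β • X) : β ∈ spectrum ℂ A := by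
  intro hu
  apply hX
  have h1 : X * (algebraMap ℂ _ β - A) = 0 := by
    rw [mul_sub, h, Algebra.algebraMap_eq_smul_one]; simp
  exact (hu.mul_left_eq_zero).1 h1

lemma mem_spectrum_of_left {n : ℕ} {A X : Matrix (Fin n) (Fin n) ℂ} {γ : ℂ} (hX : X ≠ 0)
    (h : Aᴴ * X = γ • X) : star γ ∈ spectrum ℂ A := by
  apply mem_spectrum_of_right (X := Xᴴ)
  · simpa using hX
  · have := congrArg conjTranspose h
    simpa using this

/-- The scalar estimate. -/
lemma scalar_est (p c : ℝ) (hp : 0 < p) (α β μ : ℂ)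
    (hα : p * ‖α‖ ^ 2 + c ^ 2 * (‖α‖ ^ 2) ^ 2 < ‖1 + c * α ^ 2‖ ^ 2)
    (hβ : p * ‖β‖ ^ 2 + c ^ 2 * (‖β‖ ^ 2) ^ 2 < ‖1 + c * β ^ 2‖ ^ 2)
    (h : μ * (star (1 + c * α ^ 2) * (1 + c * β ^ 2)) =
      p * (star α * β) + c ^ 2 * (star α ^ 2 * β ^ 2)) : ‖μ‖ < 1 := by
  have h1 := congrArg norm h
  have h2 : ‖(p : ℂ) * (star α * β) + c ^ 2 * (star α ^ 2 * β ^ 2)‖ ≤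
      p * (‖α‖ * ‖β‖) + c ^ 2 * (‖α‖ ^ 2 * ‖β‖ ^ 2) := by
    refine (norm_add_le _ _).trans (le_of_eq ?_)
    simp [abs_of_pos hp]
  rw [← h1, norm_mul, norm_mul, norm_star] at h2
  have hs := norm_nonneg (1 + (c : ℂ) * α ^ 2)
  have ht := norm_nonneg (1 + (c : ℂ) * β ^ 2)
  have hx := norm_nonneg α
  have hy := norm_nonneg β
  generalize ‖1 + (c : ℂ) * α ^ 2‖ = s at *
  generalize ‖1 + (c : ℂ) * β ^ 2‖ = t at *
  generalize ‖α‖ = x at *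
  generalize ‖β‖ = y at *
  have hQ : (p * (x * y) + c ^ 2 * (x ^ 2 * y ^ 2)) ^ 2 ≤
      (p * x ^ 2 + c ^ 2 * (x ^ 2) ^ 2) * (p * y ^ 2 + c ^ 2 * (y ^ 2) ^ 2) := by
    have : 0 ≤ p * c ^ 2 * (x * y * (x - y)) ^ 2 := by positivity
    linarith
  have hlt : (p * x ^ 2 + c ^ 2 * (x ^ 2) ^ 2) * (p * y ^ 2 + c ^ 2 * (y ^ 2) ^ 2) <
      s ^ 2 * t ^ 2 := mul_lt_mul'' hα hβ (by positivity) (by positivity)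
  have h3 : p * (x * y) + c ^ 2 * (x ^ 2 * y ^ 2) < s * t := by
    apply lt_of_pow_lt_pow_left₀ 2 (by positivity)
    rw [mul_pow]
    exact hQ.trans_lt hlt
  by_contra hcon
  push Not at hcon
  have : s * t ≤ ‖μ‖ * (s * t) := le_mul_of_one_le_left (by positivity) hcon
  linarith

lemma ellipse_eq (a b : ℝ) (ha : 0 < a) (hb : 0 < b) (z : ℂ)
    (hz : z.re ^ 2 / a ^ 2 + z.im ^ 2 / b ^ 2 < 1) :
    (1 / (2 * a ^ 2) + 1 / (2 * b ^ 2)) * ‖z‖ ^ 2 +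
      (1 / (4 * b ^ 2) - 1 / (4 * a ^ 2)) ^ 2 * (‖z‖ ^ 2) ^ 2 <
    ‖1 + ((1 / (4 * b ^ 2) - 1 / (4 * a ^ 2) : ℝ) : ℂ) * z ^ 2‖ ^ 2 := by
  rw [← Complex.normSq_eq_norm_sq, ← Complex.normSq_eq_norm_sq, Complex.normSq_apply,
    Complex.normSq_apply]
  have e1 : (1 + ((1 / (4 * b ^ 2) - 1 / (4 * a ^ 2) : ℝ) : ℂ) * z ^ 2).re =
    1 + (1 / (4 * b ^ 2) - 1 / (4 * a ^ 2)) * (z.re ^ 2 - z.im ^ 2) := by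
    rw [Complex.add_re, Complex.re_ofReal_mul]; simp [sq]
  have e2 : (1 + ((1 / (4 * b ^ 2) - 1 / (4 * a ^ 2) : ℝ) : ℂ) * z ^ 2).im =
    (1 / (4 * b ^ 2) - 1 / (4 * a ^ 2)) * (2 * z.re * z.im) := by
    rw [Complex.add_im, Complex.im_ofReal_mul]; simp [sq]; left; ring
  rw [e1, e2, ← sub_pos]
  rw [← sub_pos] at hz
  refine hz.trans_eq ?_
  field_simp
  ring

/-- Easy direction. -/
lemma easy_dir {n : ℕ} (a b : ℝ) (ha : 0 < a) (hb : 0 < b)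
    (C : Matrix (Fin n) (Fin n) ℂ) (hC : C.PosDef) (A H : Matrix (Fin n) (Fin n) ℂ)
    (hH : H.PosDef)
    (hE : H - ((1 / (2 * a ^ 2) + 1 / (2 * b ^ 2) : ℝ) : ℂ) • (Aᴴ * H * A)
          - ((1 / (4 * a ^ 2) - 1 / (4 * b ^ 2) : ℝ) : ℂ) • (H * A ^ 2 + Aᴴ ^ 2 * H) = C)
    (μ : ℂ) (hμ : μ ∈ spectrum ℂ A) : μ.re ^ 2 / a ^ 2 + μ.im ^ 2 / b ^ 2 < 1 := by
  have h1 : Module.End.HasEigenvalue (Matrix.toLin' A) μ := by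
    rw [Module.End.hasEigenvalue_iff_mem_spectrum]
    rwa [Matrix.spectrum_toLin']
  obtain ⟨v, hv⟩ := h1.exists_hasEigenvector
  have hAv : A *ᵥ v = μ • v := by simpa using hv.apply_eq_smul
  have hv0 : v ≠ 0 := hv.2
  have hvA : star v ᵥ* Aᴴ = star μ • star v := by
    rw [← star_mulVec, hAv, star_smul]
  have h2 := hC.dotProduct_mulVec_pos hv0
  have h3 := hH.dotProduct_mulVec_pos hv0
  have t1 : star v ⬝ᵥ ((Aᴴ * H * A) *ᵥ v) = star μ * μ * (star v ⬝ᵥ (H *ᵥ v)) := by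
    rw [← mulVec_mulVec, hAv, ← mulVec_mulVec, dotProduct_mulVec, hvA]
    simp [mulVec_smul, smul_eq_mul]; ring
  have t2 : star v ⬝ᵥ ((H * A ^ 2) *ᵥ v) = μ ^ 2 * (star v ⬝ᵥ (H *ᵥ v)) := by
    rw [pow_two A, ← mulVec_mulVec, ← mulVec_mulVec, hAv, mulVec_smul, hAv]
    simp [mulVec_smul, smul_eq_mul]; ring
  have t3 : star v ⬝ᵥ ((Aᴴ ^ 2 * H) *ᵥ v) = star μ ^ 2 * (star v ⬝ᵥ (H *ᵥ v)) := by
    rw [pow_two Aᴴ, ← mulVec_mulVec, ← mulVec_mulVec, dotProduct_mulVec, hvA, smul_dotProduct,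
      dotProduct_mulVec, hvA]
    simp [smul_eq_mul]; ring
  rw [← hE, sub_mulVec, sub_mulVec, smul_mulVec, smul_mulVec, add_mulVec, dotProduct_sub,
    dotProduct_sub, dotProduct_smul, dotProduct_smul, dotProduct_add, t1, t2, t3] at h2
  set q := star v ⬝ᵥ (H *ᵥ v)
  have e : q - ((1 / (2 * a ^ 2) + 1 / (2 * b ^ 2) : ℝ) : ℂ) • (star μ * μ * q) -
      ((1 / (4 * a ^ 2) - 1 / (4 * b ^ 2) : ℝ) : ℂ) • (μ ^ 2 * q + star μ ^ 2 * q) =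
      ((1 - (μ.re ^ 2 / a ^ 2 + μ.im ^ 2 / b ^ 2) : ℝ) : ℂ) * q := by
    have f1 : star μ * μ = ((μ.re ^ 2 + μ.im ^ 2 : ℝ) : ℂ) := by
      apply Complex.ext <;> simp [sq] <;> ring
    have f2 : μ ^ 2 + star μ ^ 2 = ((2 * (μ.re ^ 2 - μ.im ^ 2) : ℝ) : ℂ) := by
      apply Complex.ext <;> simp [sq] <;> ring
    rw [← add_mul, f1, f2, smul_eq_mul, smul_eq_mul, ← mul_assoc, ← mul_assoc,
      ← Complex.ofReal_mul, ← Complex.ofReal_mul]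
    have f3 : 1 - (μ.re ^ 2 / a ^ 2 + μ.im ^ 2 / b ^ 2) =
      1 - (1 / (2 * a ^ 2) + 1 / (2 * b ^ 2)) * (μ.re ^ 2 + μ.im ^ 2) -
      (1 / (4 * a ^ 2) - 1 / (4 * b ^ 2)) * (2 * (μ.re ^ 2 - μ.im ^ 2)) := by
      field_simp; ring
    rw [f3]; push_cast; ring
  rw [e] at h2
  have h2' := (Complex.lt_def.1 h2).1
  have h3' := (Complex.lt_def.1 h3).1
  rw [Complex.re_ofReal_mul] at h2'
  simp only [Complex.zero_re] at h2' h3'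
  have := (pos_iff_pos_of_mul_pos h2').2 h3'
  linarith

open scoped Matrix.Norms.Frobenius in
lemma hard_dir {n : ℕ} (p c : ℝ) (hp : 0 < p) (hc : 0 < c)
    (C : Matrix (Fin n) (Fin n) ℂ) (hC : C.PosDef) (A : Matrix (Fin n) (Fin n) ℂ)
    (hA : ∀ z ∈ spectrum ℂ A,
      p * ‖z‖ ^ 2 + c ^ 2 * (‖z‖ ^ 2) ^ 2 < ‖1 + (c : ℂ) * z ^ 2‖ ^ 2) :
    ∃ H : Matrix (Fin n) (Fin n) ℂ, H.PosDef ∧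
      H - (p : ℂ) • (Aᴴ * H * A) + (c : ℂ) • (H * A ^ 2 + Aᴴ ^ 2 * H) = C := by
  obtain ⟨M, hM⟩ : ∃ M : Matrix (Fin n) (Fin n) ℂ, M = 1 + (c : ℂ) • A ^ 2 := ⟨_, rfl⟩
  have hMu : IsUnit M := by
    by_contra hcon
    have h0 : (0 : ℂ) ∈ spectrum ℂ M := by rwa [spectrum.zero_mem_iff]
    let P : Polynomial ℂ := Polynomial.C (c : ℂ) * Polynomial.X ^ 2 + Polynomial.C 1
    have hP : Polynomial.aeval A P = M := by
      simp [P, hM, Algebra.smul_def, add_comm]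
    have hdeg : 0 < P.degree := by
      have hc' : (c : ℂ) ≠ 0 := by exact_mod_cast hc.ne'
      have : P.degree = 2 := by
        simp only [P]
        compute_degree!
        exact hc.ne'
      rw [this]; norm_num
    rw [← hP, spectrum.map_polynomial_aeval_of_degree_pos A P hdeg] at h0
    obtain ⟨z, hz, hz0⟩ := h0
    have h1 := hA z hz
    have h2 : 1 + (c : ℂ) * z ^ 2 = 0 := by
      simpa [P, add_comm] using hz0
    rw [h2] at h1
    have : 0 ≤ p * ‖z‖ ^ 2 + c ^ 2 * (‖z‖ ^ 2) ^ 2 := by positivity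
    simp at h1
    linarith
  obtain ⟨N, hMN, hNM⟩ : ∃ N, M * N = 1 ∧ N * M = 1 := by
    obtain ⟨u, rfl⟩ := hMu
    exact ⟨↑u⁻¹, u.mul_inv, u.inv_mul⟩
  have hAM : A * M = M * A := by
    rw [hM]; simp [mul_add, add_mul, pow_two, mul_assoc]
  have hAN : A * N = N * A := by
    calc A * N = (N * M) * (A * N) := by rw [hNM, one_mul]
      _ = N * (M * A) * N := by simp only [mul_assoc]
      _ = N * A * (M * N) := by rw [← hAM]; simp only [mul_assoc]
      _ = N * A := by rw [hMN, mul_one]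
  have hMN' : Nᴴ * Mᴴ = 1 := by rw [← conjTranspose_mul, hMN, conjTranspose_one]
  have hNM' : Mᴴ * Nᴴ = 1 := by rw [← conjTranspose_mul, hNM, conjTranspose_one]
  have hAN' : Aᴴ * Nᴴ = Nᴴ * Aᴴ := by rw [← conjTranspose_mul, ← hAN, conjTranspose_mul]
  let B := A * N
  let D := A ^ 2 * N
  let T : Module.End ℂ (Matrix (Fin n) (Fin n) ℂ) :=
    (p : ℂ) • (LinearMap.mulLeft ℂ Bᴴ * LinearMap.mulRight ℂ B) +
    ((c : ℂ) ^ 2) • (LinearMap.mulLeft ℂ Dᴴ * LinearMap.mulRight ℂ D)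
  have hT : ∀ X, T X = (p : ℂ) • (Bᴴ * X * B) + ((c : ℂ) ^ 2) • (Dᴴ * X * D) := by
    intro X
    simp [T, mul_assoc]
  have hBA : B * A = A * B := by simp only [B]; rw [mul_assoc, hAN]
  have hDA : D * A = A * D := by
    simp only [D]; rw [mul_assoc, ← hAN, ← mul_assoc, ← mul_assoc, pow_two, mul_assoc A A A]
  have hBA' : Bᴴ * Aᴴ = Aᴴ * Bᴴ := by rw [← conjTranspose_mul, ← hBA, conjTranspose_mul]
  have hDA' : Dᴴ * Aᴴ = Aᴴ * Dᴴ := by rw [← conjTranspose_mul, ← hDA, conjTranspose_mul]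
  have hBM : B * M = A := by simp only [B]; rw [mul_assoc, hNM, mul_one]
  have hDM : D * M = A ^ 2 := by simp only [D]; rw [mul_assoc, hNM, mul_one]
  have hBM' : Mᴴ * Bᴴ = Aᴴ := by rw [← conjTranspose_mul, hBM]
  have hDM' : Mᴴ * Dᴴ = Aᴴ ^ 2 := by rw [← conjTranspose_mul, hDM, conjTranspose_pow]
  have hMT : ∀ X, Mᴴ * T X * M = (p : ℂ) • (Aᴴ * X * A) +
      ((c : ℂ) ^ 2) • (Aᴴ ^ 2 * X * A ^ 2) := by
    intro X
    have e1 : Mᴴ * (Bᴴ * X * B) * M = Aᴴ * X * A := by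
      calc Mᴴ * (Bᴴ * X * B) * M = (Mᴴ * Bᴴ) * X * (B * M) := by simp only [mul_assoc]
        _ = _ := by rw [hBM, hBM']
    have e2 : Mᴴ * (Dᴴ * X * D) * M = Aᴴ ^ 2 * X * A ^ 2 := by
      calc Mᴴ * (Dᴴ * X * D) * M = (Mᴴ * Dᴴ) * X * (D * M) := by simp only [mul_assoc]
        _ = _ := by rw [hDM, hDM']
    rw [hT, mul_add, add_mul, mul_smul_comm, mul_smul_comm, smul_mul_assoc, smul_mul_assoc,
      e1, e2]
  have hMH : ∀ X, Mᴴ * X * M = X + (c : ℂ) • (X * A ^ 2 + Aᴴ ^ 2 * X) +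
      ((c : ℂ) ^ 2) • (Aᴴ ^ 2 * X * A ^ 2) := by
    intro X
    rw [hM]
    simp only [conjTranspose_add, conjTranspose_one, conjTranspose_smul, conjTranspose_pow,
      add_mul, mul_add, one_mul, mul_one, smul_mul_assoc, mul_smul_comm, smul_smul, smul_add,
      pow_two (c : ℂ), Complex.star_def, Complex.conj_ofReal]
    abel
  have hev : ∀ z, T.HasEigenvalue z → ‖z‖ < 1 := by
    intro μ hμ
    obtain ⟨X, β, γ, hX0, h1, h2, h3⟩ := exists_joint T (LinearMap.mulRight ℂ A)
      (LinearMap.mulLeft ℂ Aᴴ) (by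
        refine LinearMap.ext fun X => ?_
        simp only [Module.End.mul_apply, LinearMap.mulRight_apply, hT, add_mul, smul_mul_assoc]
        simp only [mul_assoc, hBA, hDA]) (by
        refine LinearMap.ext fun X => ?_
        simp only [Module.End.mul_apply, LinearMap.mulLeft_apply, hT, mul_add, mul_smul_comm]
        simp only [← mul_assoc, hBA', hDA']) (by
        refine LinearMap.ext fun X => ?_
        simp [mul_assoc]) μ hμ
    simp only [LinearMap.mulRight_apply, LinearMap.mulLeft_apply] at h2 h3
    have hβ := mem_spectrum_of_right hX0 h2
    have hγ := mem_spectrum_of_left hX0 h3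
    refine scalar_est p c hp (star γ) β μ (hA _ hγ) (hA _ hβ) ?_
    have h2' : X * A ^ 2 = β ^ 2 • X := by
      rw [pow_two, ← mul_assoc, h2, smul_mul_assoc, h2, smul_smul, pow_two]
    have h3' : Aᴴ ^ 2 * X = γ ^ 2 • X := by
      rw [pow_two, mul_assoc, h3, mul_smul_comm, h3, smul_smul, pow_two]
    have e := hMT X
    rw [h1, mul_smul_comm, smul_mul_assoc, hMH, h3', h3, h2', smul_mul_assoc, smul_mul_assoc,
      h2, h2'] at e
    simp only [smul_smul, ← add_smul] at e
    have e2 : (μ * (1 + c * γ ^ 2) * (1 + c * β ^ 2) -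
      (p * (γ * β) + c ^ 2 * (γ ^ 2 * β ^ 2))) • X = 0 := by
      rw [sub_smul, ← e, sub_eq_zero, mul_assoc, mul_smul]
      congr 1
      module
    have e3 := sub_eq_zero.1 ((smul_eq_zero.1 e2).resolve_right hX0)
    rw [star_star, ← e3]
    simp [mul_assoc]
  have hC' : (Nᴴ * C * N).PosDef := by
    refine hC.conjTranspose_mul_mul_same ?_
    intro x y hxy
    have := congrArg (M *ᵥ ·) hxy
    simpa [mulVec_mulVec, hMN] using this
  obtain ⟨H, hlim, hH⟩ := summable_end T hev (Nᴴ * C * N)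
  have hTpos : ∀ X : Matrix (Fin n) (Fin n) ℂ, X.PosSemidef → (T X).PosSemidef := by
    intro X hX
    rw [hT]
    refine ((hX.conjTranspose_mul_mul_same B).smul ?_).add
      ((hX.conjTranspose_mul_mul_same D).smul ?_)
    · exact_mod_cast hp.le
    · exact_mod_cast (sq_nonneg c)
  have hTk : ∀ k : ℕ, ((T ^ k) (Nᴴ * C * N)).PosSemidef := by
    intro k
    induction k with
    | zero => simpa using hC'.posSemidef
    | succ k ih => rw [pow_succ', Module.End.mul_apply]; exact hTpos _ ih
  have hHs : H.PosSemidef :=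
    posSemidef_of_tendsto _ H (fun N => posSemidef_sum _ fun k _ => hTk k) hlim
  refine ⟨H, ?_, ?_⟩
  · rw [sub_eq_iff_eq_add.1 hH]
    exact hC'.add_posSemidef (hTpos _ hHs)
  · have h1 : Mᴴ * (H - T H) * M = C := by
      rw [hH]
      calc Mᴴ * (Nᴴ * C * N) * M = (Mᴴ * Nᴴ) * C * (N * M) := by simp only [mul_assoc]
        _ = C := by rw [hNM', hNM, one_mul, mul_one]
    rw [mul_sub, sub_mul, hMT, hMH] at h1
    rw [← h1]
    abel

/-- The spectrum of `A` lies in the open elliptic region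
`E_i = {λ : (Re λ)²/a² + (Im λ)²/b² < 1}` iff the elliptic Lyapunov-type equation
has a Hermitian positive definite solution. -/
theorem spectrum_in_ellipse_iff_lyapunov {n : ℕ} (a b : ℝ) (hba : b < a) (hb : 0 < b)
    (C : Matrix (Fin n) (Fin n) ℂ) (hC : C.PosDef) (A : Matrix (Fin n) (Fin n) ℂ) :
    (∀ μ ∈ spectrum ℂ A, μ.re ^ 2 / a ^ 2 + μ.im ^ 2 / b ^ 2 < 1) ↔
      ∃ H : Matrix (Fin n) (Fin n) ℂ, H.PosDef ∧
        H - ((1 / (2 * a ^ 2) + 1 / (2 * b ^ 2) : ℝ) : ℂ) • (Aᴴ * H * A)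
          - ((1 / (4 * a ^ 2) - 1 / (4 * b ^ 2) : ℝ) : ℂ) • (H * A ^ 2 + Aᴴ ^ 2 * H) = C := by
  have ha : 0 < a := hb.trans hba
  constructor
  · intro h
    obtain ⟨H, hH, hE⟩ := hard_dir (1 / (2 * a ^ 2) + 1 / (2 * b ^ 2))
      (1 / (4 * b ^ 2) - 1 / (4 * a ^ 2)) (by positivity) (by
        rw [sub_pos]
        apply one_div_lt_one_div_of_lt (by positivity)
        nlinarith) C hC A (fun z hz => ellipse_eq a b ha hb z (h z hz))
    refine ⟨H, hH, ?_⟩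
    rw [← hE, ← neg_sub (1 / (4 * b ^ 2) : ℝ) (1 / (4 * a ^ 2)), Complex.ofReal_neg, neg_smul,
      sub_neg_eq_add]
  · rintro ⟨H, hH, hE⟩ μ hμ
    exact easy_dir a b ha hb C hC A H hH hE μ hμ
end

section
/- Let p > 0 and let C be a Hermitian positive definite complex n×n matrix. The spectrum of a complex n×n matrix A belongs to the open parabolic region P_i = {λ ∈ ℂ : (Im λ)² < 2p·Re λ} if and only if there exists a Hermitian positive definite complex n×n matrix H satisfying HA + A*H − (1/(2p))·A*HA + (1/(4p))·(HA² + (A*)²H) = C. -/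
open Matrix
open scoped ComplexOrder

/-- Scalar fact: the symbol does not vanish on the parabola. -/
lemma parab_symbol_ne {p : ℝ} (hp : 0 < p) {x y : ℂ} (hx : x.im ^ 2 < 2 * p * x.re)
    (hy : y.im ^ 2 < 2 * p * y.re) : y + x + (1 / (4 * p) : ℂ) * (y - x) ^ 2 ≠ 0 := by
  intro h
  have hp' : (p : ℂ) ≠ 0 := by exact_mod_cast hp.ne'
  have h2 : 4 * (p : ℂ) * (y + x) + (y - x) ^ 2 = 0 := by
    have : 4 * (p : ℂ) * (y + x + (1 / (4 * p) : ℂ) * (y - x) ^ 2)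
        = 4 * (p : ℂ) * (y + x) + (y - x) ^ 2 := by field_simp
    rw [← this, h, mul_zero]
  have h3 := congrArg Complex.re h2
  simp [pow_two] at h3
  nlinarith [sq_nonneg (y.re - x.re), sq_nonneg (y.im + x.im)]

/-- The Lyapunov-type operator. -/
noncomputable def parabL {n : ℕ} (p : ℝ) (A H : Matrix (Fin n) (Fin n) ℂ) :
    Matrix (Fin n) (Fin n) ℂ :=
  H * A + Aᴴ * H - ((1 / (2 * p) : ℝ) : ℂ) • (Aᴴ * H * A)
          + ((1 / (4 * p) : ℝ) : ℂ) • (H * A ^ 2 + Aᴴ ^ 2 * H)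

noncomputable def parabLM {n : ℕ} (p : ℝ) (A : Matrix (Fin n) (Fin n) ℂ) :
    Matrix (Fin n) (Fin n) ℂ →ₗ[ℂ] Matrix (Fin n) (Fin n) ℂ where
  toFun := parabL p A
  map_add' X Y := by
    simp only [parabL, add_mul, mul_add, smul_add]; abel
  map_smul' c X := by
    simp only [parabL, RingHom.id_apply, Matrix.smul_mul, Matrix.mul_smul, smul_add, smul_sub,
      smul_comm c]

lemma parabL_mul_right {n : ℕ} (p : ℝ) (A X : Matrix (Fin n) (Fin n) ℂ) :
    parabL p A (X * A) = parabL p A X * A := by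
  simp only [parabL, add_mul, sub_mul, Matrix.smul_mul, pow_two, Matrix.mul_assoc]

lemma parabL_star {n : ℕ} (p : ℝ) (A X : Matrix (Fin n) (Fin n) ℂ) :
    parabL p A Xᴴ = (parabL p A X)ᴴ := by
  simp only [parabL, conjTranspose_add, conjTranspose_sub, conjTranspose_smul,
    conjTranspose_mul, conjTranspose_conjTranspose, conjTranspose_pow, pow_two, Matrix.mul_assoc,
    Complex.star_def, Complex.conj_ofReal]
  rw [add_comm (Xᴴ * A), add_comm (Xᴴ * _)]

lemma parabL_inj {n : ℕ} (p : ℝ) (hp : 0 < p) (A : Matrix (Fin n) (Fin n) ℂ)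
    (hA : ∀ μ ∈ spectrum ℂ A, μ.im ^ 2 < 2 * p * μ.re) :
    Function.Injective (parabLM p A) := by
  rw [← LinearMap.ker_eq_bot]
  by_contra hne
  have : Nontrivial (LinearMap.ker (parabLM p A)) := Submodule.nontrivial_iff_ne_bot.2 hne
  let R : Module.End ℂ (LinearMap.ker (parabLM p A)) :=
    (LinearMap.mulRight ℂ A).restrict (p := LinearMap.ker (parabLM p A))
      (q := LinearMap.ker (parabLM p A)) (by
      intro X hX
      rw [LinearMap.mem_ker] at hX ⊢
      change parabL p A (X * A) = 0
      rw [parabL_mul_right]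
      change parabL p A X = 0 at hX
      rw [hX, zero_mul])
  obtain ⟨l, hl⟩ := Module.End.exists_eigenvalue R
  obtain ⟨⟨X, hX⟩, hXe⟩ := hl.exists_hasEigenvector
  have hX0 : X ≠ 0 := fun h => hXe.2 (Subtype.ext h)
  have hXl : X * A = l • X := congrArg Subtype.val hXe.apply_eq_smul
  have hXL : parabL p A X = 0 := hX
  have hlA : l ∈ spectrum ℂ A := by
    rw [spectrum.mem_iff]
    intro hu
    apply hX0
    have h0 : X * (algebraMap ℂ _ l - A) = 0 := by
      rw [mul_sub, hXl, Algebra.algebraMap_eq_smul_one, Matrix.mul_smul, mul_one, sub_self]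
    exact (hu.mul_left_eq_zero).1 h0
  have : Nontrivial (Matrix (Fin n) (Fin n) ℂ) := ⟨X, 0, hX0⟩
  have : Nonempty (Fin n) := by
    by_contra h
    rw [not_nonempty_iff] at h
    exact hX0 (Subsingleton.elim _ _)
  let g : Polynomial ℂ := Polynomial.X + Polynomial.C l +
    Polynomial.C (1 / (4 * p) : ℂ) * (Polynomial.X - Polynomial.C l) ^ 2
  have hg : Polynomial.aeval Aᴴ g * X = 0 := by
    rw [← hXL]
    have e1 : X * (A * A) = (l * l) • X := by
      rw [← mul_assoc, hXl, Matrix.smul_mul, hXl, smul_smul]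
    have e2 : Aᴴ * X * A = l • (Aᴴ * X) := by rw [mul_assoc, hXl, Matrix.mul_smul]
    simp only [g, parabL, e1, e2, hXl, map_add, map_mul, map_sub, map_pow, Polynomial.aeval_X,
      Polynomial.aeval_C, Algebra.algebraMap_eq_smul_one, pow_two, add_mul, sub_mul, mul_sub,
      Matrix.smul_mul, Matrix.mul_smul, one_mul, mul_one, smul_sub, smul_add, smul_smul]
    push_cast
    module
  have h0 : (0 : ℂ) ∈ spectrum ℂ (Polynomial.aeval Aᴴ g) := by
    rw [spectrum.zero_mem_iff]
    intro hu
    exact hX0 ((hu.mul_right_eq_zero).1 hg)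
  rw [spectrum.map_polynomial_aeval_of_nonempty _ _
    (spectrum.nonempty_of_isAlgClosed_of_finiteDimensional ℂ _)] at h0
  obtain ⟨y, hy, hgy⟩ := h0
  rw [← Matrix.star_eq_conjTranspose, spectrum.map_star, Set.mem_star] at hy
  have hy' := hA _ hy
  have hl' := hA _ hlA
  simp at hy'
  refine parab_symbol_ne hp hl' hy' ?_
  simpa [g] using hgy

/-- Quadratic form identity when `A v = μ v`. -/
lemma parab_backward {n : ℕ} (p : ℝ) (hp : 0 < p)
    (C : Matrix (Fin n) (Fin n) ℂ) (hC : C.PosDef) (A H : Matrix (Fin n) (Fin n) ℂ)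
    (hH : H.PosDef) (h : parabL p A H = C) :
    ∀ μ ∈ spectrum ℂ A, μ.im ^ 2 < 2 * p * μ.re := by
  intro μ hμ
  rw [← Matrix.spectrum_toLin', ← Module.End.hasEigenvalue_iff_mem_spectrum] at hμ
  obtain ⟨v, hv⟩ := hμ.exists_hasEigenvector
  have hAv : A *ᵥ v = μ • v := by simpa using hv.apply_eq_smul
  have hv0 : v ≠ 0 := hv.2
  have hvA : star v ᵥ* Aᴴ = star μ • star v := by
    rw [← star_mulVec, hAv, star_smul]
  have hc := hC.dotProduct_mulVec_pos hv0
  have hh := hH.dotProduct_mulVec_pos hv0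
  have key : star v ⬝ᵥ (C *ᵥ v) = (((2 * μ.re - μ.im ^ 2 / p : ℝ) : ℂ)) * (star v ⬝ᵥ (H *ᵥ v)) := by
    rw [← h]
    simp only [parabL, pow_two, add_mulVec, sub_mulVec, smul_mulVec, ← mulVec_mulVec, hAv,
      mulVec_smul, dotProduct_add, dotProduct_sub, dotProduct_smul]
    simp only [dotProduct_mulVec (star v) Aᴴ, hvA, smul_dotProduct, dotProduct_smul, smul_eq_mul,
      smul_vecMul]
    have hp' : (p : ℂ) ≠ 0 := by exact_mod_cast hp.ne'
    have e : μ = μ.re + μ.im * Complex.I := (Complex.re_add_im μ).symm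
    have e' : star μ = μ.re - μ.im * Complex.I := by
      apply Complex.ext <;> simp
    rw [e']
    generalize star v ⬝ᵥ (H *ᵥ v) = q
    generalize hr : μ.re = r at *
    generalize hs : μ.im = s at *
    subst e
    push_cast
    field_simp
    ring_nf
    simp only [Complex.I_sq]
    ring
  rw [key] at hc
  rw [Complex.lt_def] at hc hh
  simp only [Complex.re_ofReal_mul, Complex.zero_re] at hc hh
  have h1 : 0 < 2 * μ.re - μ.im ^ 2 / p := pos_of_mul_pos_left hc.1 hh.1.le
  have h2 : μ.im ^ 2 / p < 2 * μ.re := by linarith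
  rw [div_lt_iff₀ hp] at h2
  linarith

/-- A positive semidefinite solution has no kernel. -/
lemma parab_no_kernel {n : ℕ} (p : ℝ) (hp : 0 < p)
    (C : Matrix (Fin n) (Fin n) ℂ) (hC : C.PosDef) (A H : Matrix (Fin n) (Fin n) ℂ)
    (hH : H.PosSemidef) (h : parabL p A H = C) (v : Fin n → ℂ) (hv : v ≠ 0) :
    star v ⬝ᵥ (H *ᵥ v) ≠ 0 := by
  intro h0
  have hHv : H *ᵥ v = 0 := (hH.dotProduct_mulVec_zero_iff v).1 h0
  have hvH : star v ᵥ* H = 0 := by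
    rw [← hH.1.eq, ← star_mulVec, hHv, star_zero]
  have hc := hC.dotProduct_mulVec_pos hv
  have hh := hH.dotProduct_mulVec_nonneg (A *ᵥ v)
  have key : star v ⬝ᵥ (C *ᵥ v)
      = - (((1 / (2 * p) : ℝ) : ℂ) * (star (A *ᵥ v) ⬝ᵥ (H *ᵥ (A *ᵥ v)))) := by
    rw [← h, star_mulVec, ← dotProduct_mulVec]
    simp only [parabL, pow_two, add_mulVec, sub_mulVec, smul_mulVec, ← mulVec_mulVec, hHv,
      dotProduct_add, dotProduct_sub, dotProduct_smul, dotProduct_mulVec (star v) H, hvH]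
    simp
  rw [key, Complex.lt_def] at hc
  rw [Complex.le_def] at hh
  simp only [Complex.neg_re, Complex.re_ofReal_mul, Complex.zero_re] at hc hh
  have : 0 ≤ 1 / (2 * p) * (star (A *ᵥ v) ⬝ᵥ (H *ᵥ (A *ᵥ v))).re :=
    mul_nonneg (by positivity) hh.1
  linarith [hc.1]

/-- The homotopy to a scalar matrix. -/
noncomputable def parabPath {n : ℕ} (p : ℝ) (A : Matrix (Fin n) (Fin n) ℂ) (t : ℝ) :
    Matrix (Fin n) (Fin n) ℂ := ((t : ℝ) : ℂ) • A + (((1 - t) * p : ℝ) : ℂ) • 1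

lemma parabPath_spec {n : ℕ} (p : ℝ) (hp : 0 < p) (A : Matrix (Fin n) (Fin n) ℂ)
    (hA : ∀ μ ∈ spectrum ℂ A, μ.im ^ 2 < 2 * p * μ.re) (t : ℝ) (ht : t ∈ Set.Icc (0:ℝ) 1) :
    ∀ μ ∈ spectrum ℂ (parabPath p A t), μ.im ^ 2 < 2 * p * μ.re := by
  intro μ hμ
  rcases isEmpty_or_nonempty (Fin n) with hn | hn
  · exfalso
    rw [spectrum.mem_iff] at hμ
    exact hμ (isUnit_of_subsingleton _)
  have e : parabPath p A t = Polynomial.aeval A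
      (Polynomial.C (t : ℂ) * Polynomial.X + Polynomial.C (((1 - t) * p : ℝ) : ℂ)) := by
    simp only [parabPath, map_add, map_mul, Polynomial.aeval_X,
      Polynomial.aeval_C, Algebra.algebraMap_eq_smul_one, Matrix.smul_mul, one_mul]
  rw [e, spectrum.map_polynomial_aeval_of_nonempty _ _
    (spectrum.nonempty_of_isAlgClosed_of_finiteDimensional ℂ _)] at hμ
  obtain ⟨y, hy, rfl⟩ := hμ
  have h := hA y hy
  obtain ⟨h0, h1⟩ := ht
  simp only [Polynomial.eval_add, Polynomial.eval_mul, Polynomial.eval_C, Polynomial.eval_X,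
    Complex.add_im, Complex.add_re, Complex.im_ofReal_mul, Complex.re_ofReal_mul,
    Complex.ofReal_im, Complex.ofReal_re, add_zero]
  rcases eq_or_lt_of_le h0 with rfl | h0
  · nlinarith [mul_pos hp hp]
  · have a1 : t * y.im ^ 2 < t * (2 * p * y.re) := mul_lt_mul_of_pos_left h h0
    have a2 : t * (t * y.im ^ 2) ≤ 1 * (t * y.im ^ 2) :=
      mul_le_mul_of_nonneg_right h1 (by positivity)
    have a3 : 0 ≤ (1 - t) * p * p := by
      have : 0 ≤ 1 - t := by linarith
      positivity
    nlinarith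

/-- Solutions of a continuous family of injective linear equations depend continuously
on the parameter. -/
lemma parab_continuous_solution {E : Type*} [NormedAddCommGroup E] [NormedSpace ℂ E]
    [FiniteDimensional ℂ E] (T₀ T₁ T₂ : E →ₗ[ℂ] E) (s : Set ℝ) (a b c : ℝ → ℂ)
    (ha : Continuous a) (hb : Continuous b) (hc : Continuous c)
    (hinj : ∀ t ∈ s, Function.Injective (a t • T₀ + b t • T₁ + c t • T₂)) (C : E) :
    ∃ H : ℝ → E, ContinuousOn H s ∧ ∀ t ∈ s, (a t • T₀ + b t • T₁ + c t • T₂) (H t) = C := by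
  have : CompleteSpace E := FiniteDimensional.complete ℂ E
  let L : ℝ → (E →L[ℂ] E) := fun t =>
    a t • LinearMap.toContinuousLinearMap T₀ + b t • LinearMap.toContinuousLinearMap T₁
      + c t • LinearMap.toContinuousLinearMap T₂
  have hLc : Continuous L :=
    ((ha.smul continuous_const).add (hb.smul continuous_const)).add (hc.smul continuous_const)
  have hu : ∀ t ∈ s, IsUnit (L t) := by
    intro t ht
    let e := (LinearEquiv.ofInjectiveEndo _ (hinj t ht)).toContinuousLinearEquiv
    exact ⟨ContinuousLinearEquiv.toUnit e, by ext X; rfl⟩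
  refine ⟨fun t => Ring.inverse (L t) C, ?_, ?_⟩
  · intro t ht
    obtain ⟨u, hu'⟩ := hu t ht
    have h1 : ContinuousAt Ring.inverse (L t) := by
      rw [← hu']; exact NormedRing.inverse_continuousAt u
    have h2 : ContinuousAt (fun t => Ring.inverse (L t)) t :=
      ContinuousAt.comp (f := L) h1 hLc.continuousAt
    exact (h2.clm_apply continuousAt_const).continuousWithinAt
  · intro t ht
    have := Ring.mul_inverse_cancel _ (hu t ht)
    change (L t * Ring.inverse (L t)) C = C
    rw [this]; rfl

open scoped Matrix.Norms.Elementwise in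
lemma parab_family {n : ℕ} (p : ℝ) (hp : 0 < p) (A C : Matrix (Fin n) (Fin n) ℂ)
    (hA : ∀ μ ∈ spectrum ℂ A, μ.im ^ 2 < 2 * p * μ.re) :
    ∃ H : ℝ → Matrix (Fin n) (Fin n) ℂ, ContinuousOn H (Set.Icc 0 1) ∧
      ∀ t ∈ Set.Icc (0:ℝ) 1, parabL p (parabPath p A t) (H t) = C := by
  let Q := LinearMap.mulRight ℂ A
  let P := LinearMap.mulLeft ℂ Aᴴ
  let a : ℝ → ℂ := fun t => (t : ℂ)
  let b : ℝ → ℂ := fun t => 2 * ((1 - t) * p)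
  let c : ℝ → ℂ := fun t => 1 / (4 * p) * t ^ 2
  have hL : ∀ t X, (a t • (P + Q) + b t • LinearMap.id + c t • ((P - Q) ∘ₗ (P - Q)) :
      Matrix (Fin n) (Fin n) ℂ →ₗ[ℂ] Matrix (Fin n) (Fin n) ℂ) X
      = parabL p (parabPath p A t) X := by
    intro t X
    have hp' : (p : ℂ) ≠ 0 := by exact_mod_cast hp.ne'
    simp only [a, b, c, P, Q, LinearMap.add_apply, LinearMap.smul_apply, LinearMap.comp_apply,
      LinearMap.sub_apply, LinearMap.id_apply, LinearMap.mulLeft_apply, LinearMap.mulRight_apply,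
      parabL, parabPath, conjTranspose_add, conjTranspose_smul, conjTranspose_one,
      Complex.star_def, Complex.conj_ofReal, pow_two, mul_add, add_mul, Matrix.smul_mul,
      Matrix.mul_smul, one_mul, mul_one, mul_sub, sub_mul, smul_add, smul_sub, smul_smul,
      Matrix.mul_assoc]
    push_cast
    match_scalars <;> field_simp <;> ring
  obtain ⟨H, hHc, hH⟩ := parab_continuous_solution (P + Q) LinearMap.id ((P - Q) ∘ₗ (P - Q))
    (Set.Icc 0 1) a b c (by fun_prop) (by fun_prop) (by fun_prop) (by
      intro t ht X Y h
      apply parabL_inj p hp _ (parabPath_spec p hp A hA t ht)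
      change parabL p _ X = parabL p _ Y
      rw [← hL, ← hL]; exact h) C
  exact ⟨H, hHc, fun t ht => by rw [← hL]; exact hH t ht⟩

lemma parab_forward {n : ℕ} (p : ℝ) (hp : 0 < p)
    (C : Matrix (Fin n) (Fin n) ℂ) (hC : C.PosDef) (A : Matrix (Fin n) (Fin n) ℂ)
    (hA : ∀ μ ∈ spectrum ℂ A, μ.im ^ 2 < 2 * p * μ.re) :
    ∃ H : Matrix (Fin n) (Fin n) ℂ, H.PosDef ∧ parabL p A H = C := by
  obtain ⟨H, hHc, hH⟩ := parab_family p hp A C hA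
  have hherm : ∀ t ∈ Set.Icc (0:ℝ) 1, (H t).IsHermitian := by
    intro t ht
    apply parabL_inj p hp _ (parabPath_spec p hp A hA t ht)
    change parabL p _ _ = parabL p _ _
    rw [parabL_star, hH t ht, hC.1.eq]
  let q : ℝ × (Fin n → ℂ) → ℝ := fun x => (star x.2 ⬝ᵥ (H x.1 *ᵥ x.2)).re
  have hqc : ContinuousOn q (Set.Icc 0 1 ×ˢ Set.univ) := by
    apply Complex.continuous_re.comp_continuousOn
    have : ContinuousOn (fun x : ℝ × (Fin n → ℂ) => H x.1) (Set.Icc 0 1 ×ˢ Set.univ) :=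
      hHc.comp continuousOn_fst (fun x hx => hx.1)
    have hij : ∀ i j, ContinuousOn (fun x : ℝ × (Fin n → ℂ) => H x.1 i j)
        (Set.Icc 0 1 ×ˢ Set.univ) := fun i j =>
      (Continuous.comp_continuousOn (g := fun M : Matrix (Fin n) (Fin n) ℂ => M i j)
        (by fun_prop) this)
    simp only [dotProduct, mulVec, Pi.star_apply]
    refine continuousOn_finsetSum _ fun i _ => ContinuousOn.mul (by fun_prop) ?_
    exact continuousOn_finsetSum _ fun j _ => ContinuousOn.mul (hij i j) (by fun_prop)
  have posdef_of : ∀ t ∈ Set.Icc (0:ℝ) 1,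
      (∀ v : Fin n → ℂ, ‖v‖ = 1 → 0 < q (t, v)) → (H t).PosDef := by
    intro t ht h
    refine PosDef.of_dotProduct_mulVec_pos (hherm t ht) fun v hv => ?_
    have hn : 0 < ‖v‖ := norm_pos_iff.2 hv
    have h1 := h (((‖v‖⁻¹ : ℝ) : ℂ) • v) (by
      rw [norm_smul]; simp [hn.ne'])
    have h2 : q (t, ((‖v‖⁻¹ : ℝ) : ℂ) • v) = ‖v‖⁻¹ * (‖v‖⁻¹ * q (t, v)) := by
      simp only [q, star_smul, mulVec_smul, smul_dotProduct, dotProduct_smul, smul_eq_mul,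
        Complex.star_def, Complex.conj_ofReal, Complex.re_ofReal_mul]
    rw [h2] at h1
    have h3 : 0 < q (t, v) := by
      have := pos_of_mul_pos_right h1 (by positivity)
      exact pos_of_mul_pos_right this (by positivity)
    rw [Complex.lt_def]
    refine ⟨h3, ?_⟩
    exact ((hherm t ht).im_star_dotProduct_mulVec_self v).symm
  have main : ∀ t ∈ Set.Icc (0:ℝ) 1, ∀ v : Fin n → ℂ, ‖v‖ = 1 → 0 < q (t, v) := by
    by_contra hcon
    push Not at hcon
    obtain ⟨t₁, ht₁, v₁, hv₁, hq₁⟩ := hcon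
    let S : Set (ℝ × (Fin n → ℂ)) := Set.Icc 0 1 ×ˢ Metric.sphere 0 1
    have hS : IsCompact S := isCompact_Icc.prod (isCompact_sphere _ _)
    have hqS : ContinuousOn q S := hqc.mono (Set.prod_mono le_rfl (Set.subset_univ _))
    have hK : IsCompact (S ∩ q ⁻¹' Set.Iic 0) :=
      hS.of_isClosed_subset (hqS.preimage_isClosed_of_isClosed hS.isClosed isClosed_Iic)
        Set.inter_subset_left
    obtain ⟨⟨t, v⟩, ⟨⟨ht, hv⟩, hq⟩, hmin⟩ := hK.exists_isMinOn
      ⟨(t₁, v₁), ⟨ht₁, by simpa using hv₁⟩, hq₁⟩ continuous_fst.continuousOn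
    simp only at ht hv
    have hv' : ‖v‖ = 1 := by simpa using hv
    have hv0 : v ≠ 0 := by rintro rfl; simp at hv'
    have hlt : ∀ s ∈ Set.Icc (0:ℝ) 1, s < t → (H s).PosDef := by
      intro s hs hst
      apply posdef_of s hs
      intro w hw
      by_contra hneg
      have := hmin (show (s, w) ∈ S ∩ q ⁻¹' Set.Iic 0 from
        ⟨⟨hs, by simpa using hw⟩, not_lt.1 hneg⟩)
      simp only [Set.mem_setOf_eq] at this
      linarith
    have hpsd : (H t).PosSemidef := by
      rcases eq_or_lt_of_le ht.1 with h0 | h0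
      · -- scalar case
        have hh := hH t ht
        have e : parabL p (parabPath p A t) (H t) = ((2 * p : ℝ) : ℂ) • H t := by
          rw [← h0]
          have hp' : (p : ℂ) ≠ 0 := by exact_mod_cast hp.ne'
          simp only [parabL, parabPath, conjTranspose_add, conjTranspose_smul, conjTranspose_one,
            Complex.star_def, Complex.conj_ofReal, pow_two, Matrix.smul_mul, Complex.ofReal_zero,
            zero_smul, zero_add, sub_zero, one_mul,
            Matrix.mul_smul, mul_one, smul_add, smul_smul]
          push_cast
          match_scalars
          field_simp
          ring
        rw [e] at hh
        have e2 : H t = (((2 * p)⁻¹ : ℝ) : ℂ) • C := by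
          rw [← hh, smul_smul, ← Complex.ofReal_mul, inv_mul_cancel₀ (by positivity),
            Complex.ofReal_one, one_smul]
        rw [e2]
        refine hC.posSemidef.smul ?_
        exact_mod_cast (by positivity : (0:ℝ) ≤ (2 * p)⁻¹)
      · refine PosSemidef.of_dotProduct_mulVec_nonneg (hherm t ht) fun w => ?_
        rw [Complex.le_def]
        refine ⟨?_, ((hherm t ht).im_star_dotProduct_mulVec_self w).symm⟩
        have hc : ContinuousOn (fun s => q (s, w)) (Set.Icc 0 t) :=
          hqc.comp (by fun_prop) (fun s hs => ⟨⟨hs.1, hs.2.trans ht.2⟩, trivial⟩)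
        have hcl : closure (Set.Ico 0 t) = Set.Icc 0 t := closure_Ico h0.ne
        have hc' : ContinuousOn (fun s => q (s, w)) (closure (Set.Ico 0 t)) := by rwa [hcl]
        have hz : ContinuousOn (fun _ : ℝ => (0:ℝ)) (closure (Set.Ico 0 t)) := continuousOn_const
        refine le_on_closure (s := Set.Ico 0 t) (fun s hs => ?_) hz hc' (x := t) ?_
        · have := (hlt s ⟨hs.1, hs.2.le.trans ht.2⟩ hs.2).posSemidef.dotProduct_mulVec_nonneg w
          exact (Complex.le_def.1 this).1
        · rw [hcl]; exact ⟨h0.le, le_rfl⟩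
    apply parab_no_kernel p hp C hC _ _ hpsd (hH t ht) v hv0
    have hge := hpsd.dotProduct_mulVec_nonneg v
    refine le_antisymm ?_ hge
    rw [Complex.le_def]
    exact ⟨hq, (hherm t ht).im_star_dotProduct_mulVec_self v⟩
  have h1 : (1:ℝ) ∈ Set.Icc (0:ℝ) 1 := ⟨zero_le_one, le_rfl⟩
  refine ⟨H 1, posdef_of 1 h1 (main 1 h1), ?_⟩
  have := hH 1 h1
  simpa [parabPath] using this

/-- The spectrum of `A` lies in the open parabolic region
`P_i = {λ : (Im λ)² < 2p·Re λ}` iff the parabolic Lyapunov-type equation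
has a Hermitian positive definite solution. -/
theorem spectrum_in_parabola_iff_lyapunov {n : ℕ} (p : ℝ) (hp : 0 < p)
    (C : Matrix (Fin n) (Fin n) ℂ) (hC : C.PosDef) (A : Matrix (Fin n) (Fin n) ℂ) :
    (∀ μ ∈ spectrum ℂ A, μ.im ^ 2 < 2 * p * μ.re) ↔
      ∃ H : Matrix (Fin n) (Fin n) ℂ, H.PosDef ∧
        H * A + Aᴴ * H - ((1 / (2 * p) : ℝ) : ℂ) • (Aᴴ * H * A)
          + ((1 / (4 * p) : ℝ) : ℂ) • (H * A ^ 2 + Aᴴ ^ 2 * H) = C := by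
  constructor
  · exact parab_forward p hp C hC A
  · rintro ⟨H, hH, h⟩
    exact parab_backward p hp C hC A H hH h
end
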